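/- A smooth function f ∈ C^∞(ℝ^N) belongs to O_{M,ω}(ℝ^N) if and only if for every g ∈ S_ω(ℝ^N) and every m ∈ ℕ, q_{m,g}(f) := sup_{α∈ℕ₀^N} sup_{x∈ℝ^N} |g(x)|·|∂^α f(x)|·exp(−m·φ*_ω(|α|/m)) < ∞. -/

import Mathlib

open Real Set Filter

noncomputable section

abbrev Euc (N : ℕ) := EuclideanSpace ℝ (Fin N)

/-- single partial derivative in direction `i` -/
noncomputable def pd {N : ℕ} (i : Fin N) (f : Euc N → ℝ) : Euc N → ℝ :=
  fun x => fderiv ℝ f x (EuclideanSpace.single i 1)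

/-- iterated partial derivative `∂^α` for a multi-index `α` -/
noncomputable def pdm {N : ℕ} (α : Fin N → ℕ) (f : Euc N → ℝ) : Euc N → ℝ :=
  ((List.ofFn fun i : Fin N => (pd i)^[α i]).foldr (· ∘ ·) id) f

/-- length `|α|` of a multi-index -/
def msize {N : ℕ} (α : Fin N → ℕ) : ℕ := ∑ i, α i

/-- the Young conjugate `φ*_ω(s) = sup_{t ≥ 0} (s t - ω(e^t))` -/
noncomputable def phiStar (ω : ℝ → ℝ) (s : ℝ) : ℝ :=
  sSup {y : ℝ | ∃ t : ℝ, 0 ≤ t ∧ y = s * t - ω (Real.exp t)}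

/-- non-quasianalytic weight function in the sense of Braun-Meise-Taylor -/
structure IsWeightFun (ω : ℝ → ℝ) : Prop where
  nonneg : ∀ t, 0 ≤ t → 0 ≤ ω t
  cont : ContinuousOn ω (Ici 0)
  mono : MonotoneOn ω (Ici 0)
  alpha : ∃ K : ℝ, 1 ≤ K ∧ ∀ t, 0 ≤ t → ω (2 * t) ≤ K * (1 + ω t)
  beta : MeasureTheory.IntegrableOn (fun t => ω t / (1 + t ^ 2)) (Ici 1)
  gamma : ∃ a : ℝ, ∃ b : ℝ, 0 < b ∧ ∀ t, 0 ≤ t → a + b * Real.log (1 + t) ≤ ω t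
  delta : ConvexOn ℝ univ (fun t => ω (Real.exp t))

/-- membership in `𝒮_ω(ℝ^N)` -/
def MemS (ω : ℝ → ℝ) {N : ℕ} (f : Euc N → ℝ) : Prop :=
  ContDiff ℝ (⊤ : ℕ∞) f ∧ ∀ lam mu : ℝ, 0 < lam → 0 < mu → ∃ C : ℝ,
    ∀ (α : Fin N → ℕ) (x : Euc N),
      Real.exp (mu * ω ‖x‖) * |pdm α f x| ≤ C * Real.exp (lam * phiStar ω (msize α / lam))

/-- membership in `ℰ_ω(ℝ^N)` -/
def MemE (ω : ℝ → ℝ) {N : ℕ} (f : Euc N → ℝ) : Prop :=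
  ContDiff ℝ (⊤ : ℕ∞) f ∧ ∀ K : Set (Euc N), IsCompact K → ∀ m : ℕ, 0 < m → ∃ C : ℝ,
    ∀ (α : Fin N → ℕ), ∀ x ∈ K, |pdm α f x| ≤ C * Real.exp (m * phiStar ω (msize α / m))

/-- membership in `𝒟_ω(ℝ^N)` -/
def MemD (ω : ℝ → ℝ) {N : ℕ} (f : Euc N → ℝ) : Prop :=
  MemE ω f ∧ HasCompactSupport f

/-- membership in `𝒪_{M,ω}(ℝ^N)`: slowly increasing functions of Beurling type -/
def MemOM (ω : ℝ → ℝ) {N : ℕ} (f : Euc N → ℝ) : Prop :=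
  ContDiff ℝ (⊤ : ℕ∞) f ∧ ∀ m : ℕ, 0 < m → ∃ C : ℝ, 0 < C ∧ ∃ n : ℕ,
    ∀ (α : Fin N → ℕ) (x : Euc N),
      |pdm α f x| ≤ C * Real.exp (n * ω ‖x‖ + m * phiStar ω (msize α / m))

/-- the weighted sup norm `r_{m,n}` -/
noncomputable def rNorm (ω : ℝ → ℝ) {N : ℕ} (m : ℕ) (n : ℤ) (f : Euc N → ℝ) : ℝ :=
  ⨆ p : (Fin N → ℕ) × Euc N,
    |pdm p.1 f p.2| * Real.exp (-(n : ℝ) * ω ‖p.2‖ - m * phiStar ω (msize p.1 / m))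

/-- finiteness of the norm `r_{m,n}` -/
def rBdd (ω : ℝ → ℝ) {N : ℕ} (m : ℕ) (n : ℤ) (f : Euc N → ℝ) : Prop :=
  BddAbove (Set.range fun p : (Fin N → ℕ) × Euc N =>
    |pdm p.1 f p.2| * Real.exp (-(n : ℝ) * ω ‖p.2‖ - m * phiStar ω (msize p.1 / m)))

/-- membership in `𝒪^m_{n,ω}(ℝ^N)` -/
def MemOmn (ω : ℝ → ℝ) {N : ℕ} (m : ℕ) (n : ℤ) (f : Euc N → ℝ) : Prop :=
  ContDiff ℝ (⊤ : ℕ∞) f ∧ rBdd ω m n f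

/-- the norm `q_{λ,μ}` of `𝒮_ω(ℝ^N)` -/
noncomputable def qNorm (ω : ℝ → ℝ) {N : ℕ} (lam mu : ℝ) (f : Euc N → ℝ) : ℝ :=
  ⨆ p : (Fin N → ℕ) × Euc N,
    Real.exp (-(lam * phiStar ω (msize p.1 / lam)) + mu * ω ‖p.2‖) * |pdm p.1 f p.2|

/-- finiteness of the norm `q_{m,g}` -/
def qgBdd (ω : ℝ → ℝ) {N : ℕ} (m : ℕ) (g f : Euc N → ℝ) : Prop :=
  BddAbove (Set.range fun p : (Fin N → ℕ) × Euc N =>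
    |g p.2| * |pdm p.1 f p.2| * Real.exp (-(m : ℝ) * phiStar ω (msize p.1 / m)))

end

/-!
If `f` is not slowly increasing, some `m` admits points `z j` and multi-indices `α j` at which
`|∂^(α j) f|` exceeds `2 ^ j * j * exp (j * ω ‖z j‖ + m * φ*(|α j| / m))`. The sum of the translates
`2 ^ (-j) * exp (-(j * ω ‖z j‖)) * h (· - z j)` of one nonnegative `h ∈ 𝒮_ω` with `h 0 > 0` is still
in `𝒮_ω`, because `ω (s + t) ≤ K * (1 + ω s + ω t)`, and its seminorm `q_{m,g}` is infinite at `f`.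

A suitable `h` is the Gaussian when `φ*` is finite: its `k`-th derivative is at most
`k! * exp (2 - ‖x‖)`, and `ω(t) = o(t)` makes `k!` at most a constant times `exp (λ * φ*(k / λ))`.
Otherwise convexity of `t ↦ ω (exp t)` forces `ω = O(log)`. Then `phiStar` is only bounded below, so
the derivatives of `h` must be bounded uniformly in their order: `h` is the squared modulus of a
rescaled Fourier transform of a bump function.
-/

open scoped Topology Nat

/-- Weight functions for which the test functions needed below exist: as in `IsWeightFun`, but with
non-quasianalyticity weakened to `ω(t) = o(t)`, and without continuity. -/
structure IsSublinearWeight (ω : ℝ → ℝ) : Prop where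
  nonneg : ∀ t, 0 ≤ t → 0 ≤ ω t
  mono : MonotoneOn ω (Ici 0)
  doubling : ∃ K : ℝ, 1 ≤ K ∧ ∀ t, 0 ≤ t → ω (2 * t) ≤ K * (1 + ω t)
  isLittleO : ω =o[atTop] (id : ℝ → ℝ)
  exists_log_le : ∃ a : ℝ, ∃ b : ℝ, 0 < b ∧ ∀ t, 0 ≤ t → a + b * Real.log (1 + t) ≤ ω t
  convexOn_exp : ConvexOn ℝ univ (fun t => ω (Real.exp t))

section Weight

variable {ω : ℝ → ℝ}

open MeasureTheory in
theorem isLittleO_id_of_integrableOn_div_one_add_sq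
    (hnonneg : ∀ t, 0 ≤ t → 0 ≤ ω t) (hmono : MonotoneOn ω (Ici 0))
    (hint : IntegrableOn (fun t => ω t / (1 + t ^ 2)) (Ici 1)) :
    ω =o[atTop] (id : ℝ → ℝ) := by
  have htail : Tendsto (fun T : ℝ => 5 * ∫ t in Ioi T, ω t / (1 + t ^ 2)) atTop (𝓝 0) := by
    rw [← mul_zero (5 : ℝ)]
    exact (tendsto_integral_Ioi_zero tendsto_id).const_mul 5
  refine Asymptotics.isLittleO_of_tendsto' ?_ (squeeze_zero' ?_ ?_ htail)
  · filter_upwards [eventually_gt_atTop 0] with T hT hT0 using absurd hT0 hT.ne'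
  · filter_upwards [eventually_ge_atTop 0] with T hT using div_nonneg (hnonneg T hT) hT
  filter_upwards [eventually_ge_atTop 1] with T hT
  have hT0 : 0 < T := one_pos.trans_le hT
  have hint_Ioi : IntegrableOn (fun t => ω t / (1 + t ^ 2)) (Ioi T) :=
    hint.mono_set fun t ht => hT.trans (mem_Ioi.1 ht).le
  have hlower : ∀ t ∈ Ioc T (2 * T), ω T / (5 * T ^ 2) ≤ ω t / (1 + t ^ 2) := fun t ht => by
    gcongr
    · exact hnonneg t (hT0.le.trans ht.1.le)
    · exact hmono hT0.le (hT0.le.trans ht.1.le) ht.1.le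
    · nlinarith [ht.1, ht.2]
  calc ω T / T = 5 * (ω T / (5 * T ^ 2) * volume.real (Ioc T (2 * T))) := by
        rw [Real.volume_real_Ioc_of_le (by linarith)]
        field_simp
        ring
    _ ≤ 5 * ∫ t in Ioc T (2 * T), ω t / (1 + t ^ 2) := by
        gcongr
        exact setIntegral_ge_of_const_le_real measurableSet_Ioc measure_Ioc_lt_top.ne hlower
          (hint_Ioi.mono_set Ioc_subset_Ioi_self)
    _ ≤ 5 * ∫ t in Ioi T, ω t / (1 + t ^ 2) := by
        refine mul_le_mul_of_nonneg_left (setIntegral_mono_set hint_Ioi ?_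
          Ioc_subset_Ioi_self.eventuallyLE) (by norm_num)
        filter_upwards [ae_restrict_mem measurableSet_Ioi] with t ht
        exact div_nonneg (hnonneg t (hT0.le.trans (mem_Ioi.1 ht).le)) (by positivity)

theorem IsWeightFun.isSublinearWeight (hω : IsWeightFun ω) : IsSublinearWeight ω where
  nonneg := hω.nonneg
  mono := hω.mono
  doubling := hω.alpha
  isLittleO := isLittleO_id_of_integrableOn_div_one_add_sq hω.nonneg hω.mono hω.beta
  exists_log_le := hω.gamma
  convexOn_exp := hω.delta

namespace IsSublinearWeight

theorem exists_le_mul_add (hω : IsSublinearWeight ω) {ε : ℝ} (hε : 0 < ε) :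
    ∃ C : ℝ, ∀ t, 0 ≤ t → ω t ≤ ε * t + C := by
  obtain ⟨T, hT⟩ := eventually_atTop.1 (Asymptotics.isLittleO_iff.1 hω.isLittleO hε)
  refine ⟨ω |T|, fun t ht => ?_⟩
  rcases le_total t |T| with htT | hTt
  · have := hω.mono ht (abs_nonneg T) htT
    nlinarith
  · have hbound := hT t ((le_abs_self T).trans hTt)
    rw [id, Real.norm_of_nonneg ht] at hbound
    linarith [le_norm_self (ω t), hω.nonneg |T| (abs_nonneg T)]

theorem exists_add_le (hω : IsSublinearWeight ω) :
    ∃ K : ℝ, 0 < K ∧ ∀ s t, 0 ≤ s → 0 ≤ t → ω (s + t) ≤ K * (1 + ω s + ω t) := by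
  obtain ⟨K, hK, hdouble⟩ := hω.doubling
  have hmax : ∀ s t, 0 ≤ s → s ≤ t → ω (s + t) ≤ K * (1 + ω s + ω t) := fun s t hs hst =>
    calc ω (s + t) ≤ ω (2 * t) :=
          hω.mono (mem_Ici.2 (by linarith)) (mem_Ici.2 (by linarith)) (by linarith)
      _ ≤ K * (1 + ω t) := hdouble t (hs.trans hst)
      _ ≤ K * (1 + ω s + ω t) := by gcongr; linarith [hω.nonneg s hs]
  refine ⟨K, by linarith, fun s t hs ht => ?_⟩
  rcases le_total s t with hst | hts
  · exact hmax s t hs hst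
  · simpa only [add_comm, add_left_comm] using hmax t s ht hts

theorem exists_exp_translate_le {V : Type*} [SeminormedAddCommGroup V] (hω : IsSublinearWeight ω)
    (z : ℕ → V) {mu : ℝ} (hmu : 0 < mu) :
    ∃ mu' D : ℝ, 0 < mu' ∧ 0 ≤ D ∧ ∀ (j : ℕ) (x : V),
      Real.exp (mu * ω ‖x‖) * Real.exp (-(j * ω ‖z j‖)) ≤
        D * Real.exp (mu' * ω ‖x - z j‖) := by
  obtain ⟨K, hK, hadd⟩ := hω.exists_add_le
  have hnonneg : ∀ j, 0 ≤ ω ‖z j‖ := fun j => hω.nonneg _ (norm_nonneg _)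
  obtain ⟨M, hM⟩ : BddAbove (range fun j : ℕ => (mu * K - j) * ω ‖z j‖) := by
    refine (isBoundedUnder_of_eventually_le (a := 0) ?_).bddAbove_range
    filter_upwards [eventually_ge_atTop ⌈mu * K⌉₊] with j hj
    exact mul_nonpos_of_nonpos_of_nonneg (sub_nonpos.2 (Nat.ceil_le.1 hj)) (hnonneg j)
  refine ⟨mu * K, Real.exp (mu * K + M), by positivity, by positivity, fun j x => ?_⟩
  rw [← Real.exp_add, ← Real.exp_add, Real.exp_le_exp]
  have hnorm : ω ‖x‖ ≤ ω (‖x - z j‖ + ‖z j‖) :=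
    hω.mono (norm_nonneg x) (mem_Ici.2 (by positivity)) (by simpa using norm_add_le (x - z j) (z j))
  calc mu * ω ‖x‖ + -(j * ω ‖z j‖)
      ≤ mu * (K * (1 + ω ‖x - z j‖ + ω ‖z j‖)) + -(j * ω ‖z j‖) := by
        gcongr
        exact hnorm.trans (hadd _ _ (norm_nonneg _) (norm_nonneg _))
    _ = mu * K + (mu * K - j) * ω ‖z j‖ + mu * K * ω ‖x - z j‖ := by ring
    _ ≤ mu * K + M + mu * K * ω ‖x - z j‖ := by
        gcongr
        exact hM (mem_range_self j)

end IsSublinearWeight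

theorem neg_le_phiStar (hω : 0 ≤ ω 1) (s : ℝ) : -ω 1 ≤ phiStar ω s := by
  by_cases hbdd : BddAbove {y : ℝ | ∃ t : ℝ, 0 ≤ t ∧ y = s * t - ω (Real.exp t)}
  · exact le_csSup hbdd ⟨0, le_rfl, by simp⟩
  · rw [phiStar, Real.sSup_of_not_bddAbove hbdd]
    linarith

/-- The supremum defining the Young conjugate is finite at every `s`; otherwise `phiStar` takes the
junk value `0` somewhere. -/
def HasFiniteConjugate (ω : ℝ → ℝ) : Prop :=
  ∀ s : ℝ, BddAbove {y : ℝ | ∃ t : ℝ, 0 ≤ t ∧ y = s * t - ω (Real.exp t)}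

theorem HasFiniteConjugate.le_phiStar (hfin : HasFiniteConjugate ω) (s : ℝ) {t : ℝ} (ht : 0 ≤ t) :
    s * t - ω (Real.exp t) ≤ phiStar ω s :=
  le_csSup (hfin s) ⟨t, ht, rfl⟩

theorem IsSublinearWeight.exists_factorial_le (hω : IsSublinearWeight ω)
    (hfin : HasFiniteConjugate ω) {lam : ℝ} (hlam : 0 < lam) :
    ∃ C : ℝ, ∀ k : ℕ, (k ! : ℝ) ≤ C * Real.exp (lam * phiStar ω (k / lam)) := by
  obtain ⟨c, hc⟩ := hω.exists_le_mul_add (ε := (lam * Real.exp 1)⁻¹) (by positivity)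
  refine ⟨Real.exp (1 + lam * c), fun k => ?_⟩
  have hk : (0 : ℝ) < k + 1 := by positivity
  have hlog : 0 ≤ Real.log (k + 1) := Real.log_nonneg (by simp)
  -- `t = 1 + log (k + 1)` nearly attains the supremum in `phiStar ω (k / lam)` for `ω(t) = ε t`
  have hconj : k * Real.log (k + 1) ≤ 1 + lam * c + lam * phiStar ω (k / lam) := by
    have hω_le := hc (Real.exp (1 + Real.log (k + 1))) (Real.exp_nonneg _)
    have hφ_ge := hfin.le_phiStar (k / lam) (add_nonneg zero_le_one hlog)
    rw [Real.exp_add, Real.exp_log hk] at hω_le hφ_ge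
    have hlin : lam * ((lam * Real.exp 1)⁻¹ * (Real.exp 1 * (k + 1))) = k + 1 := by field_simp
    have hslope : lam * (k / lam * (1 + Real.log (k + 1))) = k + k * Real.log (k + 1) := by
      field_simp
    nlinarith
  calc (k ! : ℝ) ≤ (k + 1) ^ k := by
        have := k.factorial_le_pow
        exact_mod_cast this.trans (Nat.pow_le_pow_left k.le_succ k)
    _ = Real.exp (k * Real.log (k + 1)) := by rw [Real.exp_nat_mul, Real.exp_log hk]
    _ ≤ Real.exp (1 + lam * c + lam * phiStar ω (k / lam)) := Real.exp_le_exp.2 hconj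
    _ = Real.exp (1 + lam * c) * Real.exp (lam * phiStar ω (k / lam)) := Real.exp_add _ _

theorem IsSublinearWeight.hasFiniteConjugate_or_exists_le_log (hω : IsSublinearWeight ω) :
    HasFiniteConjugate ω ∨
      ∃ a b : ℝ, ∀ t, 0 ≤ t → ω t ≤ a + b * Real.log (1 + t) := by
  refine or_iff_not_imp_left.2 fun hinf => ?_
  obtain ⟨s, hs⟩ := not_forall.1 hinf
  rw [not_bddAbove_iff] at hs
  have hψ_le : ∀ u, 0 ≤ u → ω (Real.exp u) ≤ ω 1 + |s| * u := fun u hu => by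
    obtain ⟨_, ⟨t, ht, rfl⟩, hlt⟩ := hs (|s| * u)
    have hψ_nonneg := hω.nonneg _ (Real.exp_nonneg t)
    have hst : s * t ≤ |s| * t := by gcongr; exact le_abs_self s
    have hut : u < t := lt_of_mul_lt_mul_left (by linarith) (abs_nonneg s)
    have htpos : 0 < t := hu.trans_lt hut
    have hconv := hω.convexOn_exp.2 (mem_univ 0) (mem_univ t)
      (sub_nonneg.2 (div_le_one_of_le₀ hut.le ht)) (div_nonneg hu ht) (sub_add_cancel _ _)
    simp only [smul_eq_mul, mul_zero, zero_add, div_mul_cancel₀ u htpos.ne', Real.exp_zero] at hconv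
    calc ω (Real.exp u) ≤ (1 - u / t) * ω 1 + u / t * ω (Real.exp t) := hconv
      _ ≤ 1 * ω 1 + u / t * (|s| * t) := by
        gcongr
        · exact hω.nonneg 1 zero_le_one
        · linarith [div_nonneg hu ht]
        · linarith [mul_nonneg (abs_nonneg s) hu]
      _ = ω 1 + |s| * u := by field_simp
  refine ⟨ω 1, |s|, fun t ht => ?_⟩
  rcases le_total t 1 with ht1 | ht1
  · have := hω.mono ht (mem_Ici.2 zero_le_one) ht1
    have := mul_nonneg (abs_nonneg s) (Real.log_nonneg (by linarith : 1 ≤ 1 + t))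
    linarith
  · have htpos : 0 < t := one_pos.trans_le ht1
    calc ω t = ω (Real.exp (Real.log t)) := by rw [Real.exp_log htpos]
      _ ≤ ω 1 + |s| * Real.log t := hψ_le _ (Real.log_nonneg ht1)
      _ ≤ ω 1 + |s| * Real.log (1 + t) := by gcongr; linarith

end Weight

section MultiIndex

variable {N : ℕ} {f : Euc N → ℝ}

theorem contDiff_pd (i : Fin N) (hf : ContDiff ℝ (⊤ : ℕ∞) f) :
    ContDiff ℝ (⊤ : ℕ∞) (pd i f) :=
  (hf.fderiv_right le_rfl).clm_apply contDiff_const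

theorem norm_iteratedFDeriv_pd_le (i : Fin N) (hf : ContDiff ℝ (⊤ : ℕ∞) f) (k : ℕ) (x : Euc N) :
    ‖iteratedFDeriv ℝ k (pd i f) x‖ ≤ ‖iteratedFDeriv ℝ (k + 1) f x‖ := by
  have hf' : ContDiff ℝ (⊤ : ℕ∞) (fderiv ℝ f) := hf.fderiv_right le_rfl
  calc ‖iteratedFDeriv ℝ k (pd i f) x‖
      ≤ ‖EuclideanSpace.single i (1 : ℝ)‖ * ‖iteratedFDeriv ℝ k (fderiv ℝ f) x‖ :=
        norm_iteratedFDeriv_clm_apply_const hf'.contDiffAt (mod_cast le_top)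
    _ = ‖iteratedFDeriv ℝ (k + 1) f x‖ := by
        rw [norm_iteratedFDeriv_fderiv, PiLp.norm_single, norm_one, one_mul]

theorem contDiff_iterate_pd (i : Fin N) (hf : ContDiff ℝ (⊤ : ℕ∞) f) (a : ℕ) :
    ContDiff ℝ (⊤ : ℕ∞) ((pd i)^[a] f) := by
  induction a with
  | zero => exact hf
  | succ a ih => simpa only [Function.iterate_succ_apply'] using contDiff_pd i ih

theorem norm_iteratedFDeriv_iterate_pd_le (i : Fin N) (hf : ContDiff ℝ (⊤ : ℕ∞) f) (a k : ℕ)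
    (x : Euc N) :
    ‖iteratedFDeriv ℝ k ((pd i)^[a] f) x‖ ≤ ‖iteratedFDeriv ℝ (k + a) f x‖ := by
  induction a generalizing k with
  | zero => rfl
  | succ a ih =>
    rw [Function.iterate_succ_apply', ← add_assoc, add_right_comm]
    exact (norm_iteratedFDeriv_pd_le i (contDiff_iterate_pd i hf a) k x).trans (ih (k + 1))

theorem contDiff_foldr_iterate_pd (α : Fin N → ℕ) (hf : ContDiff ℝ (⊤ : ℕ∞) f)
    (l : List (Fin N)) :
    ContDiff ℝ (⊤ : ℕ∞) ((l.map fun i => (pd i)^[α i]).foldr (· ∘ ·) id f) := by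
  induction l with
  | nil => exact hf
  | cons i l ih => exact contDiff_iterate_pd i ih (α i)

theorem norm_iteratedFDeriv_foldr_iterate_pd_le (α : Fin N → ℕ) (hf : ContDiff ℝ (⊤ : ℕ∞) f)
    (l : List (Fin N)) (k : ℕ) (x : Euc N) :
    ‖iteratedFDeriv ℝ k ((l.map fun i => (pd i)^[α i]).foldr (· ∘ ·) id f) x‖ ≤
      ‖iteratedFDeriv ℝ (k + (l.map α).sum) f x‖ := by
  induction l generalizing k with
  | nil => rfl
  | cons i l ih =>
    rw [List.map_cons, List.map_cons, List.sum_cons, ← add_assoc]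
    exact (norm_iteratedFDeriv_iterate_pd_le i (contDiff_foldr_iterate_pd α hf l) (α i) k x).trans
      (ih (k + α i))

theorem abs_pdm_le_norm_iteratedFDeriv (hf : ContDiff ℝ (⊤ : ℕ∞) f) (α : Fin N → ℕ) (x : Euc N) :
    |pdm α f x| ≤ ‖iteratedFDeriv ℝ (msize α) f x‖ := by
  have h := norm_iteratedFDeriv_foldr_iterate_pd_le α hf (List.finRange N) 0 x
  rwa [norm_iteratedFDeriv_zero, ← List.ofFn_eq_map, ← List.ofFn_eq_map, List.sum_ofFn,
    zero_add] at h

theorem pdm_zero (f : Euc N → ℝ) : pdm 0 f = f := by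
  have hfold : ∀ k : ℕ,
      (List.replicate k (id : (Euc N → ℝ) → Euc N → ℝ)).foldr (· ∘ ·) id = id := fun k => by
    induction k with
    | zero => rfl
    | succ k ih => simp only [List.replicate_succ, List.foldr_cons, ih, Function.comp_id]
  simp only [pdm, Pi.zero_apply, Function.iterate_zero, List.ofFn_const, hfold, id]

end MultiIndex

section UltraSchwartz

variable {V : Type*} [NormedAddCommGroup V] [NormedSpace ℝ V] {ω : ℝ → ℝ} {h : V → ℝ}

/-- The estimates defining `MemS`, on any normed space: multi-index partial derivatives are replaced
by norms of iterated Fréchet derivatives. -/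
def IsUltraSchwartz (ω : ℝ → ℝ) (h : V → ℝ) : Prop :=
  ContDiff ℝ (⊤ : ℕ∞) h ∧ ∀ lam mu : ℝ, 0 < lam → 0 < mu → ∃ C : ℝ, ∀ (k : ℕ) (x : V),
    Real.exp (mu * ω ‖x‖) * ‖iteratedFDeriv ℝ k h x‖ ≤ C * Real.exp (lam * phiStar ω (k / lam))

theorem IsUltraSchwartz.memS {N : ℕ} {h : Euc N → ℝ} (hh : IsUltraSchwartz ω h) : MemS ω h := by
  refine ⟨hh.1, fun lam mu hlam hmu => ?_⟩
  obtain ⟨C, hC⟩ := hh.2 lam mu hlam hmu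
  exact ⟨C, fun α x => (mul_le_mul_of_nonneg_left (abs_pdm_le_norm_iteratedFDeriv hh.1 α x)
    (Real.exp_nonneg _)).trans (hC (msize α) x)⟩

theorem IsUltraSchwartz.exists_norm_iteratedFDeriv_le (hω : ∀ t, 0 ≤ t → 0 ≤ ω t)
    (hh : IsUltraSchwartz ω h) (k : ℕ) : ∃ B : ℝ, ∀ x, ‖iteratedFDeriv ℝ k h x‖ ≤ B := by
  obtain ⟨C, hC⟩ := hh.2 1 1 one_pos one_pos
  refine ⟨_, fun x => le_trans (le_mul_of_one_le_left (norm_nonneg _) ?_) (hC k x)⟩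
  exact Real.one_le_exp (by simpa only [one_mul] using hω _ (norm_nonneg x))

/-- The `j`-th summand of `translateSum`. -/
noncomputable def translateTerm (ω : ℝ → ℝ) (h : V → ℝ) (z : ℕ → V) (j : ℕ) (x : V) : ℝ :=
  (1 / 2) ^ j * Real.exp (-(j * ω ‖z j‖)) * h (x - z j)

/-- Translates of `h` to the points `z j`, weighted to decay faster along `z` than every
`exp (-(n * ω ‖·‖))` but no faster than `(1 / 2) ^ j * exp (-(j * ω ‖z j‖))` at `z j`. -/
noncomputable def translateSum (ω : ℝ → ℝ) (h : V → ℝ) (z : ℕ → V) (x : V) : ℝ :=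
  ∑' j, translateTerm ω h z j x

theorem contDiff_translateTerm (hh : ContDiff ℝ (⊤ : ℕ∞) h) (z : ℕ → V) (j : ℕ) :
    ContDiff ℝ (⊤ : ℕ∞) (translateTerm ω h z j) :=
  contDiff_const.mul (hh.comp (contDiff_id.sub contDiff_const))

theorem norm_iteratedFDeriv_translateTerm (hh : ContDiff ℝ (⊤ : ℕ∞) h) (z : ℕ → V) (j k : ℕ)
    (x : V) :
    ‖iteratedFDeriv ℝ k (translateTerm ω h z j) x‖ =
      (1 / 2) ^ j * Real.exp (-(j * ω ‖z j‖)) * ‖iteratedFDeriv ℝ k h (x - z j)‖ := by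
  have hshift : ContDiff ℝ (⊤ : ℕ∞) fun x => h (x - z j) := hh.comp (contDiff_id.sub contDiff_const)
  have hsmul := iteratedFDeriv_const_smul_apply' (i := k) (x := x)
    (a := (1 / 2 : ℝ) ^ j * Real.exp (-(j * ω ‖z j‖)))
    (hshift.contDiffAt.of_le (mod_cast le_top))
  simp only [smul_eq_mul] at hsmul
  unfold translateTerm
  rw [hsmul, norm_smul, iteratedFDeriv_comp_sub, Real.norm_of_nonneg (by positivity)]

theorem norm_iteratedFDeriv_translateTerm_le (hω : ∀ t, 0 ≤ t → 0 ≤ ω t)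
    (hh : ContDiff ℝ (⊤ : ℕ∞) h) (z : ℕ → V) {k : ℕ} {B : ℝ}
    (hB : ∀ x, ‖iteratedFDeriv ℝ k h x‖ ≤ B) (j : ℕ) (x : V) :
    ‖iteratedFDeriv ℝ k (translateTerm ω h z j) x‖ ≤ (1 / 2) ^ j * B := by
  rw [norm_iteratedFDeriv_translateTerm hh]
  gcongr
  · refine mul_le_of_le_one_right (by positivity) (Real.exp_le_one_iff.2 ?_)
    exact neg_nonpos.2 (mul_nonneg j.cast_nonneg (hω _ (norm_nonneg _)))
  · exact hB _

theorem contDiff_translateSum (hω : ∀ t, 0 ≤ t → 0 ≤ ω t) (hh : IsUltraSchwartz ω h)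
    (z : ℕ → V) :
    ContDiff ℝ (⊤ : ℕ∞) (translateSum ω h z) := by
  choose B hB using fun k => hh.exists_norm_iteratedFDeriv_le hω k
  exact contDiff_tsum (v := fun k j => (1 / 2) ^ j * B k)
    (fun j => contDiff_translateTerm hh.1 z j)
    (fun k _ => summable_geometric_two.mul_right (B k))
    (fun k j x _ => norm_iteratedFDeriv_translateTerm_le hω hh.1 z (hB k) j x)

theorem iteratedFDeriv_translateSum (hω : ∀ t, 0 ≤ t → 0 ≤ ω t) (hh : IsUltraSchwartz ω h)
    (z : ℕ → V) (k : ℕ) (x : V) :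
    iteratedFDeriv ℝ k (translateSum ω h z) x =
      ∑' j, iteratedFDeriv ℝ k (translateTerm ω h z j) x := by
  choose B hB using fun k => hh.exists_norm_iteratedFDeriv_le hω k
  exact iteratedFDeriv_tsum_apply (N := (⊤ : ℕ∞)) (v := fun k j => (1 / 2) ^ j * B k)
    (fun j => contDiff_translateTerm hh.1 z j)
    (fun k _ => summable_geometric_two.mul_right (B k))
    (fun k j x _ => norm_iteratedFDeriv_translateTerm_le hω hh.1 z (hB k) j x)
    (mod_cast le_top) x

theorem IsUltraSchwartz.translateSum (hω : IsSublinearWeight ω) (hh : IsUltraSchwartz ω h)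
    (z : ℕ → V) :
    IsUltraSchwartz ω (translateSum ω h z) := by
  refine ⟨contDiff_translateSum hω.nonneg hh z, fun lam mu hlam hmu => ?_⟩
  obtain ⟨mu', D, hmu', hD, hDle⟩ := hω.exists_exp_translate_le z hmu
  obtain ⟨C, hC⟩ := hh.2 lam mu' hlam hmu'
  refine ⟨2 * (D * C), fun k x => ?_⟩
  have hterm : ∀ j, ‖iteratedFDeriv ℝ k (translateTerm ω h z j) x‖ ≤
      (1 / 2) ^ j * (Real.exp (-(mu * ω ‖x‖)) *
        (D * C * Real.exp (lam * phiStar ω (k / lam)))) := fun j => by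
    rw [norm_iteratedFDeriv_translateTerm hh.1, mul_assoc]
    refine mul_le_mul_of_nonneg_left ?_ (by positivity)
    rw [Real.exp_neg (mu * _), ← div_eq_inv_mul, le_div_iff₀' (Real.exp_pos _), ← mul_assoc]
    calc Real.exp (mu * ω ‖x‖) * Real.exp (-(j * ω ‖z j‖)) * ‖iteratedFDeriv ℝ k h (x - z j)‖
        ≤ D * Real.exp (mu' * ω ‖x - z j‖) * ‖iteratedFDeriv ℝ k h (x - z j)‖ :=
          mul_le_mul_of_nonneg_right (hDle j x) (norm_nonneg _)
      _ ≤ D * C * Real.exp (lam * phiStar ω (k / lam)) := by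
          rw [mul_assoc, mul_assoc]
          exact mul_le_mul_of_nonneg_left (hC k _) hD
  rw [iteratedFDeriv_translateSum hω.nonneg hh]
  have hsum := tsum_of_norm_bounded (hasSum_geometric_two.mul_right _) hterm
  calc _ ≤ Real.exp (mu * ω ‖x‖) * (2 * (Real.exp (-(mu * ω ‖x‖)) *
        (D * C * Real.exp (lam * phiStar ω (k / lam))))) := by gcongr
    _ = 2 * (D * C) * Real.exp (lam * phiStar ω (k / lam)) := by
        rw [Real.exp_neg]
        field_simp

theorem mul_le_translateSum (hω : ∀ t, 0 ≤ t → 0 ≤ ω t) (hh : IsUltraSchwartz ω h)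
    (z : ℕ → V) (hh0 : ∀ x, 0 ≤ h x) (j : ℕ) :
    (1 / 2) ^ j * Real.exp (-(j * ω ‖z j‖)) * h 0 ≤ translateSum ω h z (z j) := by
  obtain ⟨B, hB⟩ := hh.exists_norm_iteratedFDeriv_le hω 0
  have hsum : Summable fun i => translateTerm ω h z i (z j) :=
    .of_norm_bounded (summable_geometric_two.mul_right B) fun i => by
      simpa only [norm_iteratedFDeriv_zero] using
        norm_iteratedFDeriv_translateTerm_le hω hh.1 z hB i (z j)
  have hle := hsum.le_tsum j fun i _ => mul_nonneg (by positivity) (hh0 _)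
  rwa [translateTerm, sub_self] at hle

end UltraSchwartz

section Gaussian

variable {V : Type*} [NormedAddCommGroup V] [InnerProductSpace ℝ V] {ω : ℝ → ℝ}

theorem contDiff_exp_neg_half_norm_sq :
    ContDiff ℝ (⊤ : ℕ∞) fun v : V => Real.exp (-(‖v‖ ^ 2 / 2)) :=
  Real.contDiff_exp.comp ((contDiff_norm_sq ℝ).div_const 2).neg

theorem norm_iteratedFDeriv_exp_clm_zero_le {E : Type*} [NormedAddCommGroup E] [NormedSpace ℝ E]
    (L : E →L[ℝ] ℝ) (k : ℕ) : ‖iteratedFDeriv ℝ k (fun v => Real.exp (L v)) 0‖ ≤ ‖L‖ ^ k := by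
  have hcomp := L.iteratedFDeriv_comp_right (Real.contDiff_exp (n := (⊤ : ℕ∞))) 0 (i := k)
    (mod_cast le_top)
  have hexp : ‖iteratedFDeriv ℝ k Real.exp (L 0)‖ = 1 := by
    rw [norm_iteratedFDeriv_eq_norm_iteratedDeriv, iteratedDeriv_eq_iterate, Real.iter_deriv_exp,
      map_zero, Real.exp_zero, norm_one]
  change ‖iteratedFDeriv ℝ k (Real.exp ∘ L) 0‖ ≤ _
  rw [hcomp]
  refine (ContinuousMultilinearMap.norm_compContinuousLinearMap_le _ _).trans ?_
  rw [hexp, one_mul, Finset.prod_const, Finset.card_univ, Fintype.card_fin]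

theorem fderiv_neg_half_norm_sq :
    fderiv ℝ (fun v : V => -(‖v‖ ^ 2 / 2)) = ⇑(-innerSL ℝ : V →L[ℝ] V →L[ℝ] ℝ) := by
  funext v
  have hsq := ((hasStrictFDerivAt_norm_sq v).hasFDerivAt.const_smul (2⁻¹ : ℝ)).neg
  refine HasFDerivAt.fderiv (hsq.congr_fderiv ?_ |>.congr_of_eventuallyEq ?_)
  · ext w
    simp
  · exact .of_forall fun w => by simp [div_eq_inv_mul]

theorem norm_iteratedFDeriv_neg_half_norm_sq_zero_le (k : ℕ) :
    ‖iteratedFDeriv ℝ k (fun v : V => -(‖v‖ ^ 2 / 2)) 0‖ ≤ 1 := by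
  have hfderiv_inner : fderiv ℝ ⇑(-innerSL ℝ : V →L[ℝ] V →L[ℝ] ℝ) = fun _ => -innerSL ℝ :=
    funext fun _ => ContinuousLinearMap.fderiv _
  match k with
  | 0 => simp
  | 1 =>
    rw [← norm_iteratedFDeriv_fderiv, fderiv_neg_half_norm_sq]
    simp
  | 2 =>
    rw [← norm_iteratedFDeriv_fderiv, ← norm_iteratedFDeriv_fderiv, fderiv_neg_half_norm_sq,
      hfderiv_inner, norm_iteratedFDeriv_zero, norm_neg]
    exact norm_innerSL_le ℝ
  | k + 3 =>
    rw [← norm_iteratedFDeriv_fderiv, ← norm_iteratedFDeriv_fderiv, fderiv_neg_half_norm_sq,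
      hfderiv_inner, iteratedFDeriv_succ_const]
    simp

theorem norm_iteratedFDeriv_exp_neg_half_norm_sq_zero_le (k : ℕ) :
    ‖iteratedFDeriv ℝ k (fun v : V => Real.exp (-(‖v‖ ^ 2 / 2))) 0‖ ≤ k ! := by
  have hquad : ContDiff ℝ (⊤ : ℕ∞) fun v : V => -(‖v‖ ^ 2 / 2) :=
    ((contDiff_norm_sq ℝ).div_const 2).neg
  have hcomp := norm_iteratedFDeriv_comp_le (Real.contDiff_exp (n := (⊤ : ℕ∞))) hquad
    (n := k) (mod_cast le_top) (0 : V) (C := 1) (D := 1) (fun i _ => ?_) (fun i _ _ => ?_)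
  · simpa only [Function.comp_def, one_pow, mul_one] using hcomp
  · rw [norm_iteratedFDeriv_eq_norm_iteratedDeriv, iteratedDeriv_eq_iterate, Real.iter_deriv_exp]
    simp
  · rw [one_pow]
    exact norm_iteratedFDeriv_neg_half_norm_sq_zero_le i

theorem norm_iteratedFDeriv_exp_clm_mul_exp_neg_half_norm_sq_zero_le (L : V →L[ℝ] ℝ) (k : ℕ) :
    ‖iteratedFDeriv ℝ k (fun v : V => Real.exp (L v) * Real.exp (-(‖v‖ ^ 2 / 2))) 0‖ ≤
      k ! * Real.exp ‖L‖ := by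
  calc _ ≤ ∑ i ∈ Finset.range (k + 1), (k.choose i : ℝ) *
        ‖iteratedFDeriv ℝ i (fun v : V => Real.exp (L v)) 0‖ *
        ‖iteratedFDeriv ℝ (k - i) (fun v : V => Real.exp (-(‖v‖ ^ 2 / 2))) 0‖ :=
      norm_iteratedFDeriv_mul_le (N := (⊤ : ℕ∞)) (Real.contDiff_exp.comp L.contDiff)
        contDiff_exp_neg_half_norm_sq 0 (mod_cast le_top)
    _ ≤ ∑ i ∈ Finset.range (k + 1), (k.choose i : ℝ) * ‖L‖ ^ i * (k - i)! := by
      gcongr with i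
      · exact norm_iteratedFDeriv_exp_clm_zero_le L i
      · exact norm_iteratedFDeriv_exp_neg_half_norm_sq_zero_le (k - i)
    _ = k ! * ∑ i ∈ Finset.range (k + 1), ‖L‖ ^ i / i ! := by
      rw [Finset.mul_sum]
      refine Finset.sum_congr rfl fun i hi => ?_
      rw [Nat.cast_choose ℝ (Finset.mem_range_succ_iff.1 hi)]
      field_simp
    _ ≤ k ! * Real.exp ‖L‖ := by
      gcongr
      exact Real.sum_le_exp_of_nonneg (norm_nonneg L) _

theorem norm_iteratedFDeriv_exp_neg_half_norm_sq_le (k : ℕ) (x : V) :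
    ‖iteratedFDeriv ℝ k (fun v : V => Real.exp (-(‖v‖ ^ 2 / 2))) x‖ ≤
      k ! * Real.exp (2 - ‖x‖) := by
  have hexpand : (fun v : V => Real.exp (-(‖x + v‖ ^ 2 / 2))) = fun v =>
      Real.exp (-(‖x‖ ^ 2 / 2)) •
        (Real.exp ((-innerSL ℝ x) v) * Real.exp (-(‖v‖ ^ 2 / 2))) := by
    ext v
    rw [smul_eq_mul, ← Real.exp_add, ← Real.exp_add, norm_add_sq_real,
      neg_apply, innerSL_apply_apply]
    ring_nf
  have hsmooth : ContDiff ℝ (⊤ : ℕ∞) fun v : V =>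
      Real.exp ((-innerSL ℝ x) v) * Real.exp (-(‖v‖ ^ 2 / 2)) :=
    (Real.contDiff_exp.comp (-innerSL ℝ x).contDiff).mul contDiff_exp_neg_half_norm_sq
  have htrans := iteratedFDeriv_comp_add_left (𝕜 := ℝ)
    (f := fun v : V => Real.exp (-(‖v‖ ^ 2 / 2))) k x 0
  rw [add_zero, hexpand] at htrans
  rw [← htrans, iteratedFDeriv_const_smul_apply' (hsmooth.contDiffAt.of_le (mod_cast le_top)),
    norm_smul, Real.norm_of_nonneg (Real.exp_nonneg _)]
  calc _ ≤ Real.exp (-(‖x‖ ^ 2 / 2)) * (k ! * Real.exp ‖-innerSL ℝ x‖) := by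
        gcongr
        exact norm_iteratedFDeriv_exp_clm_mul_exp_neg_half_norm_sq_zero_le _ k
    _ = k ! * Real.exp (‖x‖ - ‖x‖ ^ 2 / 2) := by
      rw [norm_neg, innerSL_apply_norm, mul_left_comm, ← Real.exp_add, neg_add_eq_sub]
    _ ≤ k ! * Real.exp (2 - ‖x‖) := by
      refine mul_le_mul_of_nonneg_left (Real.exp_le_exp.2 ?_) (by positivity)
      nlinarith [sq_nonneg (‖x‖ - 2)]

theorem isUltraSchwartz_exp_neg_half_norm_sq (hω : IsSublinearWeight ω)
    (hfin : HasFiniteConjugate ω) :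
    IsUltraSchwartz ω fun v : V => Real.exp (-(‖v‖ ^ 2 / 2)) := by
  refine ⟨contDiff_exp_neg_half_norm_sq, fun lam mu hlam hmu => ?_⟩
  obtain ⟨C, hfact⟩ := hω.exists_factorial_le hfin hlam
  obtain ⟨c, hc⟩ := hω.exists_le_mul_add (inv_pos.2 hmu)
  refine ⟨Real.exp (mu * c + 2) * C, fun k x => ?_⟩
  have hωx : mu * ω ‖x‖ ≤ ‖x‖ + mu * c := by
    have := mul_le_mul_of_nonneg_left (hc ‖x‖ (norm_nonneg x)) hmu.le
    rwa [mul_add, mul_inv_cancel_left₀ hmu.ne'] at this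
  calc _ ≤ Real.exp (‖x‖ + mu * c) * (k ! * Real.exp (2 - ‖x‖)) := by
        gcongr
        exact norm_iteratedFDeriv_exp_neg_half_norm_sq_le k x
    _ = Real.exp (mu * c + 2) * k ! := by
        rw [mul_left_comm, ← Real.exp_add, mul_comm]
        ring_nf
    _ ≤ Real.exp (mu * c + 2) * C * Real.exp (lam * phiStar ω (k / lam)) := by
        rw [mul_assoc]
        gcongr
        exact hfact k

end Gaussian

section BandLimited

open MeasureTheory Metric
open scoped FourierTransform RealInnerProductSpace

variable {V : Type*} [NormedAddCommGroup V] [InnerProductSpace ℝ V]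

theorem exists_two_mul_add_two_pow_mul_le (n : ℕ) :
    ∃ C : ℝ, ∀ k : ℕ, (2 * k + 2 : ℝ) ^ n * (k + 1) ≤ C * 2 ^ k := by
  obtain ⟨M, hM⟩ := (tendsto_pow_const_mul_const_pow_of_abs_lt_one (n + 1)
    (r := (1 / 2 : ℝ)) (by norm_num [abs_of_pos])).bddAbove_range
  refine ⟨2 ^ n * (2 * M), fun k => ?_⟩
  have hk : ((k + 1 : ℕ) : ℝ) ^ (n + 1) * (1 / 2) ^ (k + 1) ≤ M := hM (mem_range_self (k + 1))
  rw [one_div, inv_pow, ← div_eq_mul_inv, div_le_iff₀ (by positivity)] at hk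
  push_cast at hk
  calc (2 * k + 2 : ℝ) ^ n * (k + 1) = 2 ^ n * (k + 1) ^ (n + 1) := by
        rw [← mul_add_one, mul_pow, pow_succ, mul_assoc]
    _ ≤ 2 ^ n * (M * 2 ^ (k + 1)) := by gcongr
    _ = 2 ^ n * (2 * M) * 2 ^ k := by ring

section Fourier

variable [FiniteDimensional ℝ V] [MeasurableSpace V] [BorelSpace V]
  {E : Type*} [NormedAddCommGroup E] [NormedSpace ℂ E] {u : V → E}

theorem integrable_pow_mul_norm_iteratedFDeriv (hu : ContDiff ℝ (⊤ : ℕ∞) u)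
    (hsupp : HasCompactSupport u) (k n : ℕ) :
    Integrable fun v => ‖v‖ ^ k * ‖iteratedFDeriv ℝ n u v‖ := by
  have hcont : Continuous fun v => ‖iteratedFDeriv ℝ n u v‖ :=
    (hu.continuous_iteratedFDeriv (mod_cast le_top)).norm
  exact ((continuous_norm.pow k).mul hcont).integrable_of_hasCompactSupport
    (hsupp.iteratedFDeriv n).norm.mul_left

theorem contDiff_fourier_of_hasCompactSupport (hu : ContDiff ℝ (⊤ : ℕ∞) u)
    (hsupp : HasCompactSupport u) : ContDiff ℝ (⊤ : ℕ∞) (𝓕 u) :=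
  Real.contDiff_fourier fun n _ => by
    simpa only [norm_iteratedFDeriv_zero] using integrable_pow_mul_norm_iteratedFDeriv hu hsupp n 0

theorem exists_pow_mul_norm_iteratedFDeriv_fourier_le (hu : ContDiff ℝ (⊤ : ℕ∞) u)
    (hsupp : tsupport u ⊆ closedBall 0 1) (n : ℕ) :
    ∃ C : ℝ, ∀ (k : ℕ) (x : V),
      ‖x‖ ^ n * ‖iteratedFDeriv ℝ k (𝓕 u) x‖ ≤ C * (4 * π) ^ k := by
  have hcompact : HasCompactSupport u :=
    (isCompact_closedBall 0 1).of_isClosed_subset (isClosed_tsupport u) hsupp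
  have hint := integrable_pow_mul_norm_iteratedFDeriv hu hcompact
  obtain ⟨M, hM⟩ := exists_two_mul_add_two_pow_mul_le n
  set S := ∑ q ∈ Finset.range (n + 1), ∫ v, ‖iteratedFDeriv ℝ q u v‖
  have hS_nonneg : 0 ≤ S := Finset.sum_nonneg fun q _ => integral_nonneg fun v => norm_nonneg _
  have hmoment : ∀ p q : ℕ, ∫ v, ‖v‖ ^ p * ‖iteratedFDeriv ℝ q u v‖ ≤
      ∫ v, ‖iteratedFDeriv ℝ q u v‖ := fun p q => by
    refine integral_mono (hint p q) (by simpa using hint 0 q) fun v => ?_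
    by_cases hv : v ∈ tsupport (iteratedFDeriv ℝ q u)
    · refine mul_le_of_le_one_left (norm_nonneg _) (pow_le_one₀ (norm_nonneg v) ?_)
      exact mem_closedBall_zero_iff.1 (hsupp (tsupport_iteratedFDeriv_subset q hv))
    · simp [image_eq_zero_of_notMem_tsupport hv]
  refine ⟨M * S, fun k x => ?_⟩
  calc _ ≤ (2 * π) ^ k * (2 * k + 2) ^ n * ∑ p ∈ Finset.range (k + 1) ×ˢ Finset.range (n + 1),
          ∫ v, ‖v‖ ^ p.1 * ‖iteratedFDeriv ℝ p.2 u v‖ :=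
        Real.pow_mul_norm_iteratedFDeriv_fourier_le (K := ⊤) (N := ⊤) hu
          (fun p q _ _ => hint p q) le_top le_top x
    _ ≤ (2 * π) ^ k * (2 * k + 2) ^ n * ((k + 1) * S) := by
        gcongr
        rw [Finset.sum_product]
        refine (Finset.sum_le_card_nsmul _ _ S fun p _ => ?_).trans_eq (by simp)
        exact Finset.sum_le_sum fun q _ => hmoment p q
    _ = (2 * π) ^ k * ((2 * k + 2) ^ n * (k + 1)) * S := by ring
    _ ≤ (2 * π) ^ k * (M * 2 ^ k) * S :=
        mul_le_mul_of_nonneg_right (mul_le_mul_of_nonneg_left (hM k) (by positivity)) hS_nonneg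
    _ = M * S * (4 * π) ^ k := by
        rw [show 4 * π = 2 * (2 * π) by ring, mul_pow 2 (2 * π)]
        ring

end Fourier

theorem exists_pow_mul_norm_iteratedFDeriv_comp_smul_le {E : Type*} [NormedAddCommGroup E]
    [NormedSpace ℝ E] {F : V → E} (hF : ContDiff ℝ (⊤ : ℕ∞) F) {a : ℝ} (ha : 0 < a) {n : ℕ}
    (hbound : ∃ C : ℝ, ∀ (k : ℕ) (x : V), ‖x‖ ^ n * ‖iteratedFDeriv ℝ k F x‖ ≤ C * a ^ k) :
    ∃ C : ℝ, ∀ (k : ℕ) (x : V),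
      ‖x‖ ^ n * ‖iteratedFDeriv ℝ k (fun y => F ((2 * a)⁻¹ • y)) x‖ ≤ C * (1 / 2) ^ k := by
  obtain ⟨C, hC⟩ := hbound
  refine ⟨(2 * a) ^ n * C, fun k x => ?_⟩
  have hscale : ‖x‖ = 2 * a * ‖(2 * a)⁻¹ • x‖ := by
    rw [norm_smul, Real.norm_of_nonneg (by positivity)]
    field_simp
  rw [iteratedFDeriv_comp_const_smul _ (hF.of_le (mod_cast le_top)), norm_smul,
    Real.norm_of_nonneg (by positivity), hscale]
  calc _ = (2 * a) ^ n * ((2 * a)⁻¹) ^ k *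
        (‖(2 * a)⁻¹ • x‖ ^ n * ‖iteratedFDeriv ℝ k F ((2 * a)⁻¹ • x)‖) := by ring
    _ ≤ (2 * a) ^ n * ((2 * a)⁻¹) ^ k * (C * a ^ k) :=
        mul_le_mul_of_nonneg_left (hC k _) (by positivity)
    _ = (2 * a) ^ n * C * (1 / 2) ^ k := by
        rw [mul_mul_mul_comm, ← mul_pow]
        field_simp

theorem exists_pow_mul_norm_iteratedFDeriv_norm_sq_le {E : Type*} [NormedAddCommGroup E]
    [InnerProductSpace ℝ E] {G : V → E} (hG : ContDiff ℝ (⊤ : ℕ∞) G)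
    (hbound : ∀ n : ℕ, ∃ C : ℝ, ∀ (k : ℕ) (x : V),
      ‖x‖ ^ n * ‖iteratedFDeriv ℝ k G x‖ ≤ C * (1 / 2) ^ k) (n : ℕ) :
    ∃ C : ℝ, ∀ (k : ℕ) (x : V),
      ‖x‖ ^ n * ‖iteratedFDeriv ℝ k (fun y => ‖G y‖ ^ 2) x‖ ≤ C := by
  obtain ⟨A, hA⟩ := hbound n
  obtain ⟨B, hB⟩ := hbound 0
  refine ⟨A * B, fun k x => ?_⟩
  simp only [← real_inner_self_eq_norm_sq]
  calc _ ≤ ‖x‖ ^ n * ∑ i ∈ Finset.range (k + 1),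
        (k.choose i : ℝ) * ‖iteratedFDeriv ℝ i G x‖ * ‖iteratedFDeriv ℝ (k - i) G x‖ := by
        gcongr
        exact (innerSL ℝ).norm_iteratedFDeriv_le_of_bilinear_of_le_one hG hG x (mod_cast le_top)
          (norm_innerSL_le ℝ)
    _ ≤ ∑ i ∈ Finset.range (k + 1), (k.choose i : ℝ) * (A * B * (1 / 2) ^ k) := by
        rw [Finset.mul_sum]
        refine Finset.sum_le_sum fun i hi => ?_
        have hB' := hB (k - i) x
        rw [pow_zero, one_mul] at hB'
        calc _ = (k.choose i : ℝ) * ((‖x‖ ^ n * ‖iteratedFDeriv ℝ i G x‖) *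
              ‖iteratedFDeriv ℝ (k - i) G x‖) := by ring
          _ ≤ (k.choose i : ℝ) * ((A * (1 / 2) ^ i) * (B * (1 / 2) ^ (k - i))) := by
            refine mul_le_mul_of_nonneg_left (mul_le_mul (hA i x) hB' (norm_nonneg _) ?_)
              (by positivity)
            exact (by positivity : (0 : ℝ) ≤ ‖x‖ ^ n * ‖iteratedFDeriv ℝ i G x‖).trans (hA i x)
          _ = (k.choose i : ℝ) * (A * B * (1 / 2) ^ k) := by
            rw [mul_mul_mul_comm, ← pow_add, Nat.add_sub_of_le (Finset.mem_range_succ_iff.1 hi)]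
    _ = A * B := by
        rw [← Finset.sum_mul, ← Nat.cast_sum, Nat.sum_range_choose]
        push_cast
        rw [mul_left_comm, ← mul_pow]
        norm_num

theorem exists_contDiff_tsupport_subset_fourier_ne_zero [FiniteDimensional ℝ V] [MeasurableSpace V]
    [BorelSpace V] :
    ∃ u : V → ℂ, ContDiff ℝ (⊤ : ℕ∞) u ∧ tsupport u ⊆ closedBall 0 1 ∧ 𝓕 u 0 ≠ 0 := by
  let χ : ContDiffBump (0 : V) := ⟨1 / 2, 1, by norm_num, by norm_num⟩
  refine ⟨fun v => (χ v : ℂ), Complex.ofRealCLM.contDiff.comp χ.contDiff, ?_, ?_⟩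
  · refine (closure_mono ?_).trans χ.tsupport_eq.subset
    exact Function.support_comp_subset Complex.ofReal_zero _
  · have hfourier : 𝓕 (fun v => (χ v : ℂ)) 0 = ((∫ v, χ v : ℝ) : ℂ) := by
      simp [Real.fourier_eq', integral_complex_ofReal]
    rw [hfourier]
    exact_mod_cast χ.integral_pos.ne'

/-- A smooth function all of whose derivatives decay rapidly, uniformly in the order of the
derivative. -/
def IsUniformlySchwartz (h : V → ℝ) : Prop :=
  ContDiff ℝ (⊤ : ℕ∞) h ∧ ∀ n : ℕ, ∃ C : ℝ, ∀ (k : ℕ) (x : V),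
    ‖x‖ ^ n * ‖iteratedFDeriv ℝ k h x‖ ≤ C

theorem exists_isUniformlySchwartz [FiniteDimensional ℝ V] :
    ∃ h : V → ℝ, IsUniformlySchwartz h ∧ (∀ x, 0 ≤ h x) ∧ 0 < h 0 := by
  borelize V
  obtain ⟨u, hu, hsupp, hu0⟩ := exists_contDiff_tsupport_subset_fourier_ne_zero (V := V)
  have hcompact : HasCompactSupport u :=
    (isCompact_closedBall 0 1).of_isClosed_subset (isClosed_tsupport u) hsupp
  have hsmooth := contDiff_fourier_of_hasCompactSupport hu hcompact
  have hG : ContDiff ℝ (⊤ : ℕ∞) fun y : V => 𝓕 u ((2 * (4 * π))⁻¹ • y) :=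
    hsmooth.comp (contDiff_const_smul _)
  refine ⟨fun y => ‖𝓕 u ((2 * (4 * π))⁻¹ • y)‖ ^ 2, ⟨hG.norm_sq ℝ, ?_⟩, fun _ => by positivity, ?_⟩
  · exact exists_pow_mul_norm_iteratedFDeriv_norm_sq_le hG fun n =>
      exists_pow_mul_norm_iteratedFDeriv_comp_smul_le hsmooth (by positivity)
        (exists_pow_mul_norm_iteratedFDeriv_fourier_le hu hsupp n)
  · simpa only [smul_zero] using pow_pos (norm_pos_iff.2 hu0) 2

theorem exists_exp_mul_le_of_le_log {ω : ℝ → ℝ} {a b : ℝ}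
    (hlog : ∀ t, 0 ≤ t → ω t ≤ a + b * Real.log (1 + t)) {mu : ℝ} (hmu : 0 < mu) :
    ∃ (n : ℕ) (C : ℝ), 0 ≤ C ∧ ∀ t, 0 ≤ t → Real.exp (mu * ω t) ≤ C * (1 + t ^ n) := by
  obtain ⟨n, hn⟩ := exists_nat_ge (mu * b)
  refine ⟨n, Real.exp (mu * a) * 2 ^ (n - 1), by positivity, fun t ht => ?_⟩
  have hbase : 0 < 1 + t := by positivity
  have hlog_nonneg : 0 ≤ Real.log (1 + t) := Real.log_nonneg (by simpa using ht)
  calc Real.exp (mu * ω t) ≤ Real.exp (mu * (a + b * Real.log (1 + t))) := by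
        gcongr
        exact hlog t ht
    _ = Real.exp (mu * a) * Real.exp (mu * b * Real.log (1 + t)) := by
        rw [← Real.exp_add]
        ring_nf
    _ ≤ Real.exp (mu * a) * Real.exp (n * Real.log (1 + t)) := by gcongr
    _ = Real.exp (mu * a) * (1 + t) ^ n := by rw [Real.exp_nat_mul, Real.exp_log hbase]
    _ ≤ Real.exp (mu * a) * (2 ^ (n - 1) * (1 + t ^ n)) := by
        gcongr
        simpa only [one_pow] using add_pow_le zero_le_one ht n
    _ = Real.exp (mu * a) * 2 ^ (n - 1) * (1 + t ^ n) := (mul_assoc _ _ _).symm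

theorem IsUniformlySchwartz.isUltraSchwartz {ω : ℝ → ℝ} {h : V → ℝ}
    (hh : IsUniformlySchwartz h) (hω1 : 0 ≤ ω 1) {a b : ℝ}
    (hlog : ∀ t, 0 ≤ t → ω t ≤ a + b * Real.log (1 + t)) : IsUltraSchwartz ω h := by
  refine ⟨hh.1, fun lam mu hlam hmu => ?_⟩
  obtain ⟨n, D, hD, hexp⟩ := exists_exp_mul_le_of_le_log hlog hmu
  obtain ⟨C₀, hC₀⟩ := hh.2 0
  obtain ⟨C, hC⟩ := hh.2 n
  refine ⟨D * (C₀ + C) * Real.exp (lam * ω 1), fun k x => ?_⟩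
  have hφ : 1 ≤ Real.exp (lam * ω 1) * Real.exp (lam * phiStar ω (k / lam)) := by
    rw [← Real.exp_add, ← mul_add]
    refine Real.one_le_exp (mul_nonneg hlam.le ?_)
    linarith [neg_le_phiStar hω1 (k / lam)]
  have hderiv : (1 + ‖x‖ ^ n) * ‖iteratedFDeriv ℝ k h x‖ ≤ C₀ + C := by
    rw [add_mul, ← pow_zero ‖x‖]
    exact add_le_add (hC₀ k x) (hC k x)
  have hC_nonneg : 0 ≤ C₀ + C :=
    le_trans (by positivity : 0 ≤ (1 + ‖x‖ ^ n) * ‖iteratedFDeriv ℝ k h x‖) hderiv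
  calc _ ≤ D * (1 + ‖x‖ ^ n) * ‖iteratedFDeriv ℝ k h x‖ := by
        gcongr
        exact hexp _ (norm_nonneg x)
    _ ≤ D * (C₀ + C) := by
        rw [mul_assoc]
        gcongr
    _ ≤ D * (C₀ + C) * (Real.exp (lam * ω 1) * Real.exp (lam * phiStar ω (k / lam))) :=
        le_mul_of_one_le_right (by positivity) hφ
    _ = _ := (mul_assoc _ _ _).symm

end BandLimited

theorem exists_isUltraSchwartz {V : Type*} [NormedAddCommGroup V] [InnerProductSpace ℝ V]
    [FiniteDimensional ℝ V] {ω : ℝ → ℝ} (hω : IsSublinearWeight ω) :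
    ∃ h : V → ℝ, IsUltraSchwartz ω h ∧ (∀ x, 0 ≤ h x) ∧ 0 < h 0 := by
  rcases hω.hasFiniteConjugate_or_exists_le_log with hfin | ⟨a, b, hlog⟩
  · exact ⟨_, isUltraSchwartz_exp_neg_half_norm_sq hω hfin, fun _ => Real.exp_nonneg _,
      Real.exp_pos _⟩
  · obtain ⟨h, hh, hnonneg, hpos⟩ := exists_isUniformlySchwartz (V := V)
    exact ⟨h, hh.isUltraSchwartz (hω.nonneg 1 zero_le_one) hlog, hnonneg, hpos⟩

section SlowlyIncreasing

variable {N : ℕ} {ω : ℝ → ℝ} {f : Euc N → ℝ}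

theorem exists_memS_ge (hω : IsSublinearWeight ω) (z : ℕ → Euc N) :
    ∃ g : Euc N → ℝ, MemS ω g ∧ ∃ δ : ℝ, 0 < δ ∧
      ∀ j : ℕ, δ * ((1 / 2) ^ j * Real.exp (-(j * ω ‖z j‖))) ≤ g (z j) := by
  obtain ⟨h, hh, hnonneg, hpos⟩ := exists_isUltraSchwartz (V := Euc N) hω
  refine ⟨translateSum ω h z, (hh.translateSum hω z).memS, h 0, hpos, fun j => ?_⟩
  rw [mul_comm]
  exact mul_le_translateSum hω.nonneg hh z hnonneg j

theorem MemOM.qgBdd (hω : ∀ t, 0 ≤ t → 0 ≤ ω t) (hf : MemOM ω f) {g : Euc N → ℝ} (hg : MemS ω g)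
    {m : ℕ} (hm : 0 < m) : qgBdd ω m g f := by
  obtain ⟨C, hC, n, hfbound⟩ := hf.2 m hm
  obtain ⟨C', hgbound⟩ := hg.2 1 (n + 1) one_pos (by positivity)
  refine ⟨C' * Real.exp (1 * phiStar ω (msize (0 : Fin N → ℕ) / 1)) * C, ?_⟩
  rintro _ ⟨⟨α, x⟩, rfl⟩
  have hgx := hgbound 0 x
  rw [pdm_zero] at hgx
  have hωx := hω _ (norm_nonneg x)
  simp only [neg_mul]
  set P := (m : ℝ) * phiStar ω (msize α / m)
  calc |g x| * |pdm α f x| * Real.exp (-P)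
      ≤ |g x| * (C * Real.exp (n * ω ‖x‖ + P)) * Real.exp (-P) := by
        gcongr
        exact hfbound α x
    _ = Real.exp (n * ω ‖x‖) * |g x| * C := by
        rw [Real.exp_add, Real.exp_neg]
        field_simp
    _ ≤ Real.exp ((n + 1) * ω ‖x‖) * |g x| * C := by
        gcongr
        linarith
    _ ≤ _ := by gcongr

theorem memOM_of_forall_qgBdd (hω : IsSublinearWeight ω) (hf : ContDiff ℝ (⊤ : ℕ∞) f)
    (hbdd : ∀ g : Euc N → ℝ, MemS ω g → ∀ m : ℕ, 0 < m → qgBdd ω m g f) : MemOM ω f := by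
  refine ⟨hf, fun m hm => ?_⟩
  by_contra! hlarge
  choose α z hz using fun j : ℕ => hlarge (j * 2 ^ j + 1) (by positivity) j
  obtain ⟨g, hg, δ, hδ, hge⟩ := exists_memS_ge hω z
  obtain ⟨B, hB⟩ := hbdd g hg m hm
  obtain ⟨j, hj⟩ := exists_nat_gt (B / δ)
  rw [div_lt_iff₀' hδ] at hj
  have hgB := hB ⟨(α j, z j), rfl⟩
  simp only [neg_mul] at hgB
  refine hj.not_ge (le_trans ?_ hgB)
  set P := (m : ℝ) * phiStar ω (msize (α j) / m)
  have hfz : j * 2 ^ j * Real.exp (j * ω ‖z j‖ + P) ≤ |pdm (α j) f (z j)| :=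
    le_trans (by gcongr; linarith) (hz j).le
  calc δ * j = δ * ((1 / 2) ^ j * Real.exp (-(j * ω ‖z j‖))) *
        (j * 2 ^ j * Real.exp (j * ω ‖z j‖ + P)) * Real.exp (-P) := by
        rw [one_div, inv_pow, Real.exp_add, Real.exp_neg, Real.exp_neg]
        field_simp
    _ ≤ |g (z j)| * |pdm (α j) f (z j)| * Real.exp (-P) := by
        gcongr
        exact (hge j).trans (le_abs_self _)

end SlowlyIncreasing

theorem memOM_iff_qg_finite_general {N : ℕ} {ω : ℝ → ℝ} (hω : IsSublinearWeight ω)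
    {f : Euc N → ℝ} (hf : ContDiff ℝ (⊤ : ℕ∞) f) :
    MemOM ω f ↔ ∀ g : Euc N → ℝ, MemS ω g → ∀ m : ℕ, 0 < m → qgBdd ω m g f :=
  ⟨fun hOM _ hg _ hm => hOM.qgBdd hω.nonneg hg hm, memOM_of_forall_qgBdd hω hf⟩

theorem memOM_iff_qg_finite {N : ℕ} (ω : ℝ → ℝ) (hω : IsWeightFun ω)
    (hvan : ∀ t ∈ Set.Icc (0:ℝ) 1, ω t = 0)
    (f : Euc N → ℝ) (hf : ContDiff ℝ (⊤ : ℕ∞) f) :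
    MemOM ω f ↔ ∀ g : Euc N → ℝ, MemS ω g → ∀ m : ℕ, 0 < m → qgBdd ω m g f :=
  memOM_iff_qg_finite_general hω.isSublinearWeight hf
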